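/- arXiv:0710.0106 — 2 statements merged into one kernel-verified Lean document; each statement's English description precedes it below -/
import Mathlib

section
/- Let q > 1/2 and let f be a fuzzy q-almost quadratic function from a fuzzy normed space (X, N) into a fuzzy Banach space (Y, N′). Then there exists a unique quadratic function Q : X → Y such that N′ (Q(x) − f(x)) t ≥ N x (((2^(2−p) − 1)/4)^q · t^q) for all x ∈ X and all t > 0, where p = 1/q. Moreover Q(x) is the fuzzy limit of the sequence f(2^n x)/4^n. -/
/-!
Write `D n x = 4⁻ⁿ f(2ⁿ x)`. Taking `y = x` in the almost-quadratic inequality makes the increments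
`D (n + 1) x - D n x` geometrically small, of ratio `2^p / 4 < 1`, so `D · x` converges to some
`Q x`, and summing the geometric series bounds `Q x - f x`.

As `4^q > 2`, the factor `4^(n q)` gained by rescaling the argument of `N` beats the factor `2ⁿ`
lost by dilating `x`. So the quadratic defect of `D n` tends to `0`, and `Q` is quadratic. For the
same reason `D n x` tends to `Q' x` for every quadratic `Q'` satisfying the estimate, which gives
uniqueness.
-/

open Filter Finset

/-- A fuzzy norm on a real vector space, following Bag–Samanta. -/
structure IsFuzzyNorm {X : Type*} [AddCommGroup X] [Module ℝ X] (N : X → ℝ → ℝ) : Prop where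
  nonneg : ∀ (x : X) (t : ℝ), 0 ≤ N x t
  le_one : ∀ (x : X) (t : ℝ), N x t ≤ 1
  eq_zero_of_nonpos : ∀ (x : X) (c : ℝ), c ≤ 0 → N x c = 0
  eq_zero_iff : ∀ x : X, x = 0 ↔ ∀ c : ℝ, 0 < c → N x c = 1
  smul_eq : ∀ (c : ℝ) (x : X) (t : ℝ), c ≠ 0 → N (c • x) t = N x (t / |c|)
  min_le_add : ∀ (x y : X) (s t : ℝ), min (N x s) (N y t) ≤ N (x + y) (s + t)
  mono : ∀ x : X, Monotone (N x)
  tendsto_one : ∀ x : X, Tendsto (N x) atTop (nhds 1)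

/-- Convergence of a sequence to a fuzzy limit in a fuzzy normed space. -/
def FuzzyTendsto {X : Type*} [AddCommGroup X] [Module ℝ X] (N : X → ℝ → ℝ)
    (xs : ℕ → X) (x : X) : Prop :=
  ∀ t : ℝ, 0 < t → Tendsto (fun n => N (xs n - x) t) atTop (nhds 1)

/-- Cauchy sequences in a fuzzy normed space. -/
def FuzzyCauchy {X : Type*} [AddCommGroup X] [Module ℝ X] (N : X → ℝ → ℝ)
    (xs : ℕ → X) : Prop :=
  ∀ ε : ℝ, 0 < ε → ∀ t : ℝ, 0 < t → ∃ n₀ : ℕ, ∀ n ≥ n₀, ∀ p : ℕ, 0 < p →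
    1 - ε < N (xs (n + p) - xs n) t

/-- A fuzzy normed space is complete (a fuzzy Banach space) if every Cauchy
sequence converges. -/
def IsFuzzyComplete {X : Type*} [AddCommGroup X] [Module ℝ X] (N : X → ℝ → ℝ) : Prop :=
  ∀ xs : ℕ → X, FuzzyCauchy N xs → ∃ x : X, FuzzyTendsto N xs x

/-- Quadratic functional equation. -/
def IsQuadratic {X Y : Type*} [AddCommGroup X] [AddCommGroup Y] (Q : X → Y) : Prop :=
  ∀ x y : X, Q (x + y) + Q (x - y) = 2 • Q x + 2 • Q y

/-- Additive functional equation. -/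
def IsAdditive {X Y : Type*} [AddCommGroup X] [AddCommGroup Y] (T : X → Y) : Prop :=
  ∀ x y : X, T (x + y) = T x + T y

section FuzzyNorm

variable {X : Type*} [AddCommGroup X] [Module ℝ X] {N : X → ℝ → ℝ}

namespace IsFuzzyNorm

lemma apply_neg (hN : IsFuzzyNorm N) (x : X) (t : ℝ) : N (-x) t = N x t := by
  simpa using hN.smul_eq (-1) x t (by norm_num)

lemma apply_sub_comm (hN : IsFuzzyNorm N) (x y : X) (t : ℝ) : N (x - y) t = N (y - x) t := by
  rw [← hN.apply_neg, neg_sub]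

lemma apply_zero (hN : IsFuzzyNorm N) {t : ℝ} (ht : 0 < t) : N 0 t = 1 :=
  (hN.eq_zero_iff 0).1 rfl t ht

lemma apply_smul_of_pos (hN : IsFuzzyNorm N) {c : ℝ} (hc : 0 < c) (x : X) (t : ℝ) :
    N (c • x) t = N x (t / c) := by
  rw [hN.smul_eq c x t hc.ne', abs_of_pos hc]

lemma apply_inv_smul_of_pos (hN : IsFuzzyNorm N) {c : ℝ} (hc : 0 < c) (x : X) (t : ℝ) :
    N (c⁻¹ • x) t = N x (c * t) := by
  rw [hN.apply_smul_of_pos (inv_pos.2 hc), div_inv_eq_mul, mul_comm]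

lemma le_apply_sub_sum_Ico (hN : IsFuzzyNorm N) {a : ℕ → X} {s : ℕ → ℝ} {b : ℝ}
    (h : ∀ n, b ≤ N (a (n + 1) - a n) (s n)) {n m : ℕ} (hnm : n < m) :
    b ≤ N (a m - a n) (∑ i ∈ Ico n m, s i) := by
  induction m, hnm using Nat.le_induction with
  | base => simpa using h n
  | succ m hnm ih =>
    have hstep := (le_min ih (h m)).trans (hN.min_le_add _ _ _ _)
    rwa [add_comm (a m - a n), sub_add_sub_cancel, ← sum_Ico_succ_top (Nat.le_of_succ_le hnm)]
      at hstep

lemma le_apply_sub_of_le_geometric (hN : IsFuzzyNorm N) {a : ℕ → X} {b C r : ℝ} (hC : 0 ≤ C)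
    (hr₀ : 0 ≤ r) (hr₁ : r < 1) (h : ∀ n, b ≤ N (a (n + 1) - a n) (C * r ^ n)) {n m : ℕ}
    (hnm : n < m) : b ≤ N (a m - a n) (C * r ^ n / (1 - r)) := by
  refine (hN.le_apply_sub_sum_Ico h hnm).trans (hN.mono _ ?_)
  rw [← mul_sum, mul_div_assoc]
  exact mul_le_mul_of_nonneg_left (geom_sum_Ico_le_of_lt_one hr₀ hr₁) hC

lemma tendsto_apply_pow_smul_rpow (hN : IsFuzzyNorm N) {α β q K t : ℝ} (hα : 0 < α) (hβ : 0 ≤ β)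
    (hαβ : α < β ^ q) (hK : 0 < K) (ht : 0 < t) (x : X) :
    Tendsto (fun n : ℕ => N (α ^ n • x) (K * (β ^ n * t) ^ q)) atTop (nhds 1) := by
  have hlim : Tendsto (fun n : ℕ => K * t ^ q * (β ^ q / α) ^ n) atTop atTop :=
    (tendsto_pow_atTop_atTop_of_one_lt ((one_lt_div hα).2 hαβ)).const_mul_atTop (by positivity)
  refine ((hN.tendsto_one x).comp hlim).congr fun n => ?_
  rw [Function.comp_apply, hN.apply_smul_of_pos (pow_pos hα n), Real.mul_rpow (by positivity) ht.le,
    ← Real.rpow_pow_comm hβ, div_pow]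
  congr 1
  ring

end IsFuzzyNorm

lemma fuzzyTendsto_of_le (hN : IsFuzzyNorm N) {a : ℕ → X} {x : X} {g : ℝ → ℕ → ℝ}
    (hg : ∀ t, 0 < t → Tendsto (g t) atTop (nhds 1))
    (h : ∀ t, 0 < t → ∀ n, g t n ≤ N (a n - x) t) : FuzzyTendsto N a x := fun t ht =>
  tendsto_of_tendsto_of_tendsto_of_le_of_le (hg t ht) tendsto_const_nhds (h t ht)
    fun _ => hN.le_one _ _

lemma fuzzyCauchy_of_le_geometric (hN : IsFuzzyNorm N) {a : ℕ → X} {r : ℝ} (hr₀ : 0 ≤ r)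
    (hr₁ : r < 1) (h : ∀ b < 1, ∃ C, 0 ≤ C ∧ ∀ n, b ≤ N (a (n + 1) - a n) (C * r ^ n)) :
    FuzzyCauchy N a := by
  intro ε hε t ht
  obtain ⟨C, hC, hstep⟩ := h (1 - ε / 2) (by linarith)
  have hlim : Tendsto (fun n : ℕ => C * r ^ n / (1 - r)) atTop (nhds 0) := by
    simpa using ((tendsto_pow_atTop_nhds_zero_of_lt_one hr₀ hr₁).const_mul C).div_const (1 - r)
  obtain ⟨n₀, hn₀⟩ := eventually_atTop.1 (hlim.eventually_le_const ht)
  refine ⟨n₀, fun n hn k hk => ?_⟩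
  calc 1 - ε < 1 - ε / 2 := by linarith
    _ ≤ N (a (n + k) - a n) (C * r ^ n / (1 - r)) :=
      hN.le_apply_sub_of_le_geometric hC hr₀ hr₁ hstep (Nat.lt_add_of_pos_right hk)
    _ ≤ N (a (n + k) - a n) t := hN.mono _ (hn₀ n hn)

namespace FuzzyTendsto

variable {a a' : ℕ → X} {x x' : X}

lemma add (hN : IsFuzzyNorm N) (h : FuzzyTendsto N a x) (h' : FuzzyTendsto N a' x') :
    FuzzyTendsto N (fun n => a n + a' n) (x + x') := by
  refine fuzzyTendsto_of_le hN
    (fun t ht => by simpa using (h (t / 2) (half_pos ht)).min (h' (t / 2) (half_pos ht)))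
    fun t _ n => ?_
  simpa only [add_halves, sub_add_sub_comm]
    using hN.min_le_add (a n - x) (a' n - x') (t / 2) (t / 2)

lemma neg (hN : IsFuzzyNorm N) (h : FuzzyTendsto N a x) : FuzzyTendsto N (fun n => -a n) (-x) := by
  intro t ht
  simpa only [neg_sub_neg, hN.apply_sub_comm x] using h t ht

lemma sub (hN : IsFuzzyNorm N) (h : FuzzyTendsto N a x) (h' : FuzzyTendsto N a' x') :
    FuzzyTendsto N (fun n => a n - a' n) (x - x') := by
  simpa only [sub_eq_add_neg] using h.add hN (h'.neg hN)

lemma le_apply_sub (hN : IsFuzzyNorm N) (h : FuzzyTendsto N a x) {y : X} {b s t : ℝ} (hst : s < t)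
    (hb : ∀ᶠ n in atTop, b ≤ N (a n - y) s) : b ≤ N (x - y) t := by
  have hb₁ : b ≤ 1 := let ⟨_, hn⟩ := hb.exists; hn.trans (hN.le_one _ _)
  have hlim : Tendsto (fun n => min b (N (a n - x) (t - s))) atTop (nhds b) := by
    simpa [hb₁] using (tendsto_const_nhds (x := b)).min (h (t - s) (sub_pos.2 hst))
  refine le_of_tendsto hlim (hb.mono fun n hn => ?_)
  calc min b (N (a n - x) (t - s))
      ≤ min (N (x - a n) (t - s)) (N (a n - y) s) := by
        rw [min_comm, hN.apply_sub_comm]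
        exact min_le_min_left _ hn
    _ ≤ N (x - y) t := by
        simpa only [sub_add_sub_cancel, sub_add_cancel]
          using hN.min_le_add (x - a n) (a n - y) (t - s) s

lemma unique (hN : IsFuzzyNorm N) (h : FuzzyTendsto N a x) (h' : FuzzyTendsto N a x') :
    x = x' := by
  rw [← sub_eq_zero, hN.eq_zero_iff]
  refine fun t ht => (hN.le_one _ _).antisymm (le_of_forall_lt_imp_le_of_dense fun b hb => ?_)
  exact h.le_apply_sub hN (half_lt_self ht) ((h' _ (half_pos ht)).eventually_const_le hb)

lemma le_apply_sub_of_le_geometric (hN : IsFuzzyNorm N) (h : FuzzyTendsto N a x) {b C r t : ℝ}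
    (hC : 0 ≤ C) (hr₀ : 0 ≤ r) (hr₁ : r < 1) (hstep : ∀ n, b ≤ N (a (n + 1) - a n) (C * r ^ n))
    {n : ℕ} (ht : C * r ^ n / (1 - r) < t) : b ≤ N (x - a n) t :=
  h.le_apply_sub hN ht <| (eventually_gt_atTop n).mono fun _ =>
    hN.le_apply_sub_of_le_geometric hC hr₀ hr₁ hstep

end FuzzyTendsto

end FuzzyNorm

section QuadraticDefect

variable {X Y : Type*} [AddCommGroup X] [AddCommGroup Y]

/-- The defect of `f : X → Y` in the quadratic functional equation at `(x, y)`; it measures how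
far `f` is from being quadratic. -/
def quadraticDefect (f : X → Y) (x y : X) : Y :=
  f (x + y) + f (x - y) - 2 • f x - 2 • f y

lemma isQuadratic_iff_quadraticDefect_eq_zero {f : X → Y} :
    IsQuadratic f ↔ ∀ x y, quadraticDefect f x y = 0 := by
  simp only [IsQuadratic, quadraticDefect, sub_sub, sub_eq_zero]

lemma quadraticDefect_zero_zero (f : X → Y) : quadraticDefect f 0 0 = -(2 • f 0) := by
  simp only [quadraticDefect, add_zero, sub_zero]
  abel

lemma quadraticDefect_self (f : X → Y) (hf : f 0 = 0) (x : X) :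
    quadraticDefect f x x = f (2 • x) - 4 • f x := by
  simp only [quadraticDefect, sub_self, hf, two_nsmul]
  abel

namespace IsQuadratic

variable [IsAddTorsionFree Y] {Q : X → Y}

lemma map_zero (hQ : IsQuadratic Q) : Q 0 = 0 := by
  have h := isQuadratic_iff_quadraticDefect_eq_zero.1 hQ 0 0
  simpa [quadraticDefect_zero_zero] using h

lemma map_two_nsmul (hQ : IsQuadratic Q) (x : X) : Q (2 • x) = 4 • Q x := by
  rw [← sub_eq_zero, ← quadraticDefect_self Q hQ.map_zero]
  exact isQuadratic_iff_quadraticDefect_eq_zero.1 hQ x x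

lemma map_two_pow_nsmul (hQ : IsQuadratic Q) (n : ℕ) (x : X) : Q (2 ^ n • x) = 4 ^ n • Q x := by
  induction n with
  | zero => simp
  | succ n ih => rw [pow_succ', mul_nsmul', hQ.map_two_nsmul, ih, pow_succ', mul_nsmul']

end IsQuadratic

lemma isQuadratic_of_fuzzyTendsto [Module ℝ Y] {N : Y → ℝ → ℝ} (hN : IsFuzzyNorm N)
    {g : ℕ → X → Y} {Q : X → Y} (hQ : ∀ x, FuzzyTendsto N (g · x) (Q x))
    (hg : ∀ x y, FuzzyTendsto N (fun n => quadraticDefect (g n) x y) 0) : IsQuadratic Q := by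
  refine isQuadratic_iff_quadraticDefect_eq_zero.2 fun x y => FuzzyTendsto.unique hN ?_ (hg x y)
  have hdouble (z : X) : FuzzyTendsto N (fun n => 2 • g n z) (2 • Q z) := by
    simpa only [two_nsmul] using (hQ z).add hN (hQ z)
  exact (((hQ _).add hN (hQ _)).sub hN (hdouble x)).sub hN (hdouble y)

end QuadraticDefect

section DyadicRescaling

variable {X Y : Type*} [AddCommGroup X] [Module ℝ X] [AddCommGroup Y] [Module ℝ Y]

/-- The `n`-th Hyers approximant `x ↦ 4⁻ⁿ f(2ⁿ x)` to a quadratic function near `f`. -/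
noncomputable def dyadicRescaling (f : X → Y) (n : ℕ) (x : X) : Y :=
  ((4 : ℝ) ^ n)⁻¹ • f ((2 : ℝ) ^ n • x)

lemma dyadicRescaling_zero (f : X → Y) : dyadicRescaling f 0 = f := by
  funext x
  simp [dyadicRescaling]

lemma dyadicRescaling_succ_sub (f : X → Y) (hf : f 0 = 0) (n : ℕ) (x : X) :
    dyadicRescaling f (n + 1) x - dyadicRescaling f n x =
      ((4 : ℝ) ^ (n + 1))⁻¹ • quadraticDefect f ((2 : ℝ) ^ n • x) ((2 : ℝ) ^ n • x) := by
  have h4 : ((4 : ℝ) ^ n)⁻¹ = ((4 : ℝ) ^ (n + 1))⁻¹ * 4 := by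
    rw [pow_succ]
    field_simp
  rw [quadraticDefect_self f hf, dyadicRescaling, dyadicRescaling, h4, pow_succ' 2 n, mul_smul,
    ofNat_smul_eq_nsmul ℝ 2]
  module

lemma quadraticDefect_dyadicRescaling (f : X → Y) (n : ℕ) (x y : X) :
    quadraticDefect (dyadicRescaling f n) x y =
      ((4 : ℝ) ^ n)⁻¹ • quadraticDefect f ((2 : ℝ) ^ n • x) ((2 : ℝ) ^ n • y) := by
  simp only [quadraticDefect, dyadicRescaling, smul_add, smul_sub, smul_comm (2 : ℕ)]

lemma IsQuadratic.dyadicRescaling_eq {Q : X → Y} (hQ : IsQuadratic Q) (n : ℕ) :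
    dyadicRescaling Q n = Q := by
  have : IsAddTorsionFree Y := .of_isTorsionFree ℝ Y
  funext x
  have hdilate : Q ((2 : ℝ) ^ n • x) = (4 : ℝ) ^ n • Q x := by
    exact_mod_cast hQ.map_two_pow_nsmul n x
  rw [dyadicRescaling, hdilate, inv_smul_smul₀ (by positivity)]

end DyadicRescaling

section AlmostQuadratic

variable {X Y : Type*} [AddCommGroup X] [Module ℝ X] [AddCommGroup Y] [Module ℝ Y]
  {N : X → ℝ → ℝ} {N' : Y → ℝ → ℝ} {q : ℝ} {f : X → Y}

/-- Fuzzy `q`-almost quadratic functions from `(X, N)` to `(Y, N')`, the approximate solutions of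
the quadratic functional equation whose stability is at issue. Here `t` goes with `x` and `s` with
`y`; the restriction to nonnegative `s` and `t` avoids real powers of negative bases. -/
def IsFuzzyAlmostQuadratic (N : X → ℝ → ℝ) (N' : Y → ℝ → ℝ) (q : ℝ) (f : X → Y) : Prop :=
  ∀ x y : X, ∀ s t : ℝ, 0 ≤ s → 0 ≤ t →
    min (N x (t ^ q)) (N y (s ^ q)) ≤ N' (quadraticDefect f x y) (t + s)

lemma two_lt_four_rpow (hq : 1 / 2 < q) : (2 : ℝ) < 4 ^ q := by
  calc (2 : ℝ) = 2 ^ (1 : ℝ) := (Real.rpow_one 2).symm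
    _ < 2 ^ (2 * q) := Real.rpow_lt_rpow_of_exponent_lt one_lt_two (by linarith)
    _ = 4 ^ q := by rw [Real.rpow_mul zero_le_two]; norm_num

lemma two_rpow_inv_lt_four (hq : 1 / 2 < q) : (2 : ℝ) ^ q⁻¹ < 4 :=
  (Real.rpow_inv_lt_iff_of_pos zero_le_two (by norm_num) (by linarith)).2 (two_lt_four_rpow hq)

lemma two_rpow_two_sub_inv (q : ℝ) : (2 : ℝ) ^ (2 - q⁻¹) = 4 / 2 ^ q⁻¹ := by
  rw [Real.rpow_sub two_pos]
  norm_num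

lemma one_lt_two_rpow_two_sub_inv (hq : 1 / 2 < q) : (1 : ℝ) < 2 ^ (2 - q⁻¹) := by
  rw [two_rpow_two_sub_inv, one_lt_div (by positivity)]
  exact two_rpow_inv_lt_four hq

lemma IsQuadratic.fuzzyTendsto_dyadicRescaling {Q : X → Y} (hQ : IsQuadratic Q)
    (hN : IsFuzzyNorm N) (hN' : IsFuzzyNorm N') (hq : 1 / 2 < q) {K : ℝ} (hK : 0 < K)
    (h : ∀ x t, 0 < t → N x (K * t ^ q) ≤ N' (Q x - f x) t) (x : X) :
    FuzzyTendsto N' (dyadicRescaling f · x) (Q x) := by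
  refine fuzzyTendsto_of_le hN' (fun t ht => hN.tendsto_apply_pow_smul_rpow two_pos
    zero_le_four (two_lt_four_rpow hq) hK ht x) fun t ht n => ?_
  calc N ((2 : ℝ) ^ n • x) (K * (4 ^ n * t) ^ q)
      ≤ N' (Q ((2 : ℝ) ^ n • x) - f ((2 : ℝ) ^ n • x)) (4 ^ n * t) := h _ _ (by positivity)
    _ = N' (dyadicRescaling Q n x - dyadicRescaling f n x) t := by
        rw [dyadicRescaling, dyadicRescaling, ← smul_sub, hN'.apply_inv_smul_of_pos (by positivity)]
    _ = N' (dyadicRescaling f n x - Q x) t := by rw [hQ.dyadicRescaling_eq, hN'.apply_sub_comm]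

namespace IsFuzzyAlmostQuadratic

lemma map_zero (hf : IsFuzzyAlmostQuadratic N N' q f) (hN : IsFuzzyNorm N)
    (hN' : IsFuzzyNorm N') : f 0 = 0 := by
  have : IsAddTorsionFree Y := .of_isTorsionFree ℝ Y
  suffices quadraticDefect f 0 0 = 0 by simpa [quadraticDefect_zero_zero] using this
  refine (hN'.eq_zero_iff _).2 fun t ht => (hN'.le_one _ _).antisymm ?_
  have h := hf 0 0 (t / 2) (t / 2) (by positivity) (by positivity)
  rwa [min_self, hN.apply_zero (by positivity), add_halves] at h

lemma fuzzyTendsto_quadraticDefect_dyadicRescaling (hf : IsFuzzyAlmostQuadratic N N' q f)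
    (hN : IsFuzzyNorm N) (hN' : IsFuzzyNorm N') (hq : 1 / 2 < q) (x y : X) :
    FuzzyTendsto N' (fun n => quadraticDefect (dyadicRescaling f n) x y) 0 := by
  have hlim (t : ℝ) (ht : 0 < t) (z : X) := hN.tendsto_apply_pow_smul_rpow two_pos
    zero_le_four (two_lt_four_rpow hq) one_pos (half_pos ht) z
  refine fuzzyTendsto_of_le hN'
    (fun t ht => by simpa only [min_self] using (hlim t ht x).min (hlim t ht y)) fun t ht n => ?_
  have h := hf ((2 : ℝ) ^ n • x) ((2 : ℝ) ^ n • y) (4 ^ n * (t / 2)) (4 ^ n * (t / 2))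
    (by positivity) (by positivity)
  rwa [← mul_add, add_halves, ← hN'.apply_inv_smul_of_pos (by positivity),
    ← quadraticDefect_dyadicRescaling, ← one_mul ((_ : ℝ) ^ q), ← sub_zero (quadraticDefect _ x y)]
    at h

lemma le_apply_dyadicRescaling_succ_sub (hf : IsFuzzyAlmostQuadratic N N' q f)
    (hN : IsFuzzyNorm N) (hN' : IsFuzzyNorm N') (hq : q ≠ 0) {τ : ℝ} (hτ : 0 ≤ τ) (x : X) (n : ℕ) :
    N x (τ ^ q) ≤ N' (dyadicRescaling f (n + 1) x - dyadicRescaling f n x)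
      (τ / 2 * (2 ^ q⁻¹ / 4) ^ n) := by
  -- The dilation by `2ⁿ` is absorbed by choosing `s` with `s^q = 2ⁿ τ^q`.
  set s : ℝ := (2 ^ q⁻¹) ^ n * τ with hs
  have hs₀ : 0 ≤ s := by positivity
  have hsq : s ^ q = 2 ^ n * τ ^ q := by
    rw [hs, Real.mul_rpow (by positivity) hτ, ← Real.rpow_pow_comm (by positivity),
      Real.rpow_inv_rpow zero_le_two hq]
  calc N x (τ ^ q) = N ((2 : ℝ) ^ n • x) (s ^ q) := by
        rw [hN.apply_smul_of_pos (by positivity), hsq, mul_div_cancel_left₀ _ (by positivity)]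
    _ ≤ N' (quadraticDefect f ((2 : ℝ) ^ n • x) ((2 : ℝ) ^ n • x)) (s + s) := by
        simpa only [min_self] using hf ((2 : ℝ) ^ n • x) ((2 : ℝ) ^ n • x) s s hs₀ hs₀
    _ = N' (dyadicRescaling f (n + 1) x - dyadicRescaling f n x) (τ / 2 * (2 ^ q⁻¹ / 4) ^ n) := by
        rw [dyadicRescaling_succ_sub f (hf.map_zero hN hN'),
          hN'.apply_inv_smul_of_pos (by positivity), hs, div_pow, pow_succ]
        congr 1
        field_simp
        ring

lemma fuzzyCauchy_dyadicRescaling (hf : IsFuzzyAlmostQuadratic N N' q f) (hN : IsFuzzyNorm N)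
    (hN' : IsFuzzyNorm N') (hq : 1 / 2 < q) (x : X) : FuzzyCauchy N' (dyadicRescaling f · x) := by
  have hq₀ : 0 < q := by linarith
  have hratio : (2 : ℝ) ^ q⁻¹ / 4 < 1 := (div_lt_one four_pos).2 (two_rpow_inv_lt_four hq)
  refine fuzzyCauchy_of_le_geometric hN' (by positivity) hratio fun b hb => ?_
  have hlim : Tendsto (fun τ : ℝ => N x (τ ^ q)) atTop (nhds 1) :=
    (hN.tendsto_one x).comp (tendsto_rpow_atTop hq₀)
  obtain ⟨τ, hbτ, hτ⟩ := ((hlim.eventually_const_le hb).and (eventually_ge_atTop 0)).exists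
  exact ⟨τ / 2, by positivity, fun n =>
    hbτ.trans (hf.le_apply_dyadicRescaling_succ_sub hN hN' hq₀.ne' hτ x n)⟩

lemma le_apply_sub_of_fuzzyTendsto (hf : IsFuzzyAlmostQuadratic N N' q f) (hN : IsFuzzyNorm N)
    (hN' : IsFuzzyNorm N') (hq : 1 / 2 < q) {x : X} {y : Y}
    (hy : FuzzyTendsto N' (dyadicRescaling f · x) y) {t : ℝ} (ht : 0 < t) :
    N x ((((2 : ℝ) ^ (2 - q⁻¹) - 1) / 4) ^ q * t ^ q) ≤ N' (y - f x) t := by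
  have hq₀ : 0 < q := by linarith
  have hconst := sub_pos.2 (one_lt_two_rpow_two_sub_inv hq)
  have hρ₁ : (1 : ℝ) < 2 ^ q⁻¹ := Real.one_lt_rpow one_lt_two (inv_pos.2 hq₀)
  have hρ₄ := two_rpow_inv_lt_four hq
  rw [← Real.mul_rpow (by positivity) ht.le]
  set τ := ((2 : ℝ) ^ (2 - q⁻¹) - 1) / 4 * t with hτ
  have hτ₀ : 0 ≤ τ := by positivity
  -- The series only uses `t / (2 * 2 ^ q⁻¹)` of the available `t`; the slack allows passing to the
  -- limit, where `N'` need not be continuous.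
  have hsum : τ / 2 * (2 ^ q⁻¹ / 4) ^ 0 / (1 - 2 ^ q⁻¹ / 4) < t := by
    have hρ : (4 : ℝ) - 2 ^ q⁻¹ ≠ 0 := by linarith
    calc τ / 2 * (2 ^ q⁻¹ / 4) ^ 0 / (1 - 2 ^ q⁻¹ / 4) = t / (2 * 2 ^ q⁻¹) := by
          rw [hτ, two_rpow_two_sub_inv, one_sub_div four_ne_zero]
          field_simp
          norm_num [hρ]
      _ < t := div_lt_self ht (by linarith)
  simpa only [dyadicRescaling_zero] using hy.le_apply_sub_of_le_geometric hN'
    (by positivity) (by positivity) ((div_lt_one four_pos).2 hρ₄)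
    (hf.le_apply_dyadicRescaling_succ_sub hN hN' hq₀.ne' hτ₀ x) hsum

end IsFuzzyAlmostQuadratic

end AlmostQuadratic

/-- Fuzzy Hyers–Ulam–Rassias stability of the quadratic functional equation
(Theorem 2.1): a fuzzy `q`-almost quadratic function (`q > 1/2`) from a fuzzy
normed space into a fuzzy Banach space can be approximated by a unique
quadratic function `Q`, obtained as the fuzzy limit of `f(2^n x)/4^n`. -/
theorem fuzzy_stability_quadratic
    {X Y : Type*} [AddCommGroup X] [Module ℝ X] [AddCommGroup Y] [Module ℝ Y]
    (N : X → ℝ → ℝ) (N' : Y → ℝ → ℝ)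
    (hN : IsFuzzyNorm N) (hN' : IsFuzzyNorm N') (hYcomplete : IsFuzzyComplete N')
    (q p : ℝ) (hq : 1 / 2 < q) (hp : p = 1 / q)
    (f : X → Y)
    (hf : ∀ x y : X, ∀ s t : ℝ, 0 ≤ s → 0 ≤ t →
      min (N x (t ^ q)) (N y (s ^ q)) ≤
        N' (f (x + y) + f (x - y) - 2 • f x - 2 • f y) (t + s)) :
    ∃ Q : X → Y,
      (IsQuadratic Q ∧
        (∀ x : X, ∀ t : ℝ, 0 < t →
          N x ((((2 : ℝ) ^ ((2 : ℝ) - p) - 1) / 4) ^ q * t ^ q) ≤ N' (Q x - f x) t) ∧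
        (∀ x : X, FuzzyTendsto N' (fun n : ℕ => ((4 : ℝ) ^ n)⁻¹ • f (((2 : ℝ) ^ n) • x)) (Q x))) ∧
      ∀ Q' : X → Y, IsQuadratic Q' →
        (∀ x : X, ∀ t : ℝ, 0 < t →
          N x ((((2 : ℝ) ^ ((2 : ℝ) - p) - 1) / 4) ^ q * t ^ q) ≤ N' (Q' x - f x) t) →
        Q' = Q := by
  rw [hp, one_div]
  have hf : IsFuzzyAlmostQuadratic N N' q f := hf
  have hK : 0 < (((2 : ℝ) ^ (2 - q⁻¹) - 1) / 4) ^ q :=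
    Real.rpow_pos_of_pos (div_pos (sub_pos.2 (one_lt_two_rpow_two_sub_inv hq)) four_pos) q
  choose Q hQ using fun x => hYcomplete _ (hf.fuzzyCauchy_dyadicRescaling hN hN' hq x)
  have hQ_quadratic : IsQuadratic Q := isQuadratic_of_fuzzyTendsto hN' hQ
    (hf.fuzzyTendsto_quadraticDefect_dyadicRescaling hN hN' hq)
  refine ⟨Q, ⟨hQ_quadratic, fun x t => hf.le_apply_sub_of_fuzzyTendsto hN hN' hq (hQ x), hQ⟩, ?_⟩
  intro Q' hQ' hbound
  funext x
  exact (hQ'.fuzzyTendsto_dyadicRescaling hN hN' hq hK hbound x).unique hN' (hQ x)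
end

section
/- Let X be a real normed space, Y a real Banach space, and let 0 ≤ p < 2. Suppose f : X → Y satisfies ‖f(x+y) + f(x−y) − 2f(x) − 2f(y)‖ ≤ ‖x‖^p + ‖y‖^p for all x, y ∈ X. Then there exists a unique quadratic function Q : X → Y such that ‖Q(x) − f(x)‖ ≤ (4/(2^(2−p) − 1)) · ‖x‖^p for all x ∈ X. -/
/-!
The direct (Hyers) method works on any abelian group `X`, with a control function `φ` in place of
`‖·‖ ^ p`. Rescaling `g` to `4⁻ⁿ g (2ⁿ x)` sends to `0`, geometrically, every `g` dominated by a
function that grows by a factor at most `a < 4` under doubling. This applies to the defect of `f` in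
the quadratic equation, and to `f (2x) - 4 f x`, which is bounded by `3 φ x` (use the defect at
`(x, x)` and `(0, 0)`) and a quarter of which rescales to the difference of consecutive rescalings
of `f`. Hence these converge, to a quadratic limit at distance at most `3 / (4 - a) φ x` from `f`.
Rescaling fixes quadratic functions, so any quadratic function at distance `O(φ)` from `f` is this
limit.
-/

open Filter Finset

section QuadraticEquation

variable {X Y : Type*} [AddCommGroup X] [AddCommGroup Y]

lemma map_two_nsmul_sub_four_nsmul (f : X → Y) (x : X) :
    f (2 • x) - 4 • f x = quadraticDefect f x x - f 0 := by
  rw [quadraticDefect, sub_self, two_nsmul x]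
  abel

lemma IsQuadratic.map_zero_s3 [IsAddTorsionFree Y] {Q : X → Y} (hQ : IsQuadratic Q) : Q 0 = 0 := by
  have hdefect := isQuadratic_iff_quadraticDefect_eq_zero.mp hQ 0 0
  rwa [quadraticDefect_zero_zero, neg_eq_zero, two_nsmul_eq_zero] at hdefect

lemma IsQuadratic.map_two_nsmul_s3 [IsAddTorsionFree Y] {Q : X → Y} (hQ : IsQuadratic Q) (x : X) :
    Q (2 • x) = 4 • Q x := by
  rw [← sub_eq_zero, map_two_nsmul_sub_four_nsmul, hQ.map_zero_s3, sub_zero]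
  exact isQuadratic_iff_quadraticDefect_eq_zero.mp hQ x x

lemma IsQuadratic.map_two_pow_nsmul_s3 [IsAddTorsionFree Y] {Q : X → Y} (hQ : IsQuadratic Q)
    (n : ℕ) (x : X) : Q (2 ^ n • x) = 4 ^ n • Q x := by
  induction n with
  | zero => simp
  | succ n ih => rw [pow_succ', mul_smul, hQ.map_two_nsmul_s3, ih, smul_smul, ← pow_succ']

lemma isQuadratic_of_tendsto [TopologicalSpace Y] [IsTopologicalAddGroup Y] [T2Space Y]
    {ι : Type*} {l : Filter ι} [l.NeBot] {F : ι → X → Y} {Q : X → Y}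
    (hlim : ∀ x, Tendsto (F · x) l (nhds (Q x)))
    (hdefect : ∀ x y, Tendsto (fun i => quadraticDefect (F i) x y) l (nhds 0)) :
    IsQuadratic Q := by
  refine isQuadratic_iff_quadraticDefect_eq_zero.mpr fun x y => ?_
  refine tendsto_nhds_unique ?_ (hdefect x y)
  exact (((hlim (x + y)).add (hlim (x - y))).sub ((hlim x).const_smul 2)).sub
    ((hlim y).const_smul 2)

end QuadraticEquation

section Approximants

variable {X Y : Type*} [AddCommGroup X] [AddCommGroup Y] [Module ℝ Y]

/-- The `n`-th Hyers approximant `4⁻ⁿ f (2ⁿ x)` to a quadratic function near `f`. -/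
noncomputable def hyersApprox (f : X → Y) (n : ℕ) (x : X) : Y :=
  ((4 : ℝ) ^ n)⁻¹ • f (2 ^ n • x)

lemma hyersApprox_zero (f : X → Y) : hyersApprox f 0 = f := by
  ext x
  simp [hyersApprox]

lemma hyersApprox_sub (f g : X → Y) (n : ℕ) (x : X) :
    hyersApprox (fun z => f z - g z) n x = hyersApprox f n x - hyersApprox g n x :=
  smul_sub _ _ _

lemma hyersApprox_succ_sub (f : X → Y) (n : ℕ) (x : X) :
    hyersApprox f (n + 1) x - hyersApprox f n x =
      (4 : ℝ)⁻¹ • hyersApprox (fun z => f (2 • z) - 4 • f z) n x := by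
  simp only [hyersApprox, pow_succ', mul_smul, mul_inv]
  module

lemma quadraticDefect_hyersApprox (f : X → Y) (n : ℕ) (x y : X) :
    quadraticDefect (hyersApprox f n) x y =
      hyersApprox (fun z : X × X => quadraticDefect f z.1 z.2) n (x, y) := by
  simp only [quadraticDefect, hyersApprox, Prod.smul_mk, smul_add, smul_sub]
  module

lemma IsQuadratic.hyersApprox_eq {Q : X → Y} (hQ : IsQuadratic Q) (n : ℕ) :
    hyersApprox Q n = Q := by
  have : IsAddTorsionFree Y := .of_isTorsionFree ℝ Y
  ext x
  rw [hyersApprox, hQ.map_two_pow_nsmul_s3, ← Nat.cast_smul_eq_nsmul ℝ, Nat.cast_pow, Nat.cast_ofNat,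
    inv_smul_smul₀ (by positivity)]

end Approximants

lemma le_pow_mul_of_two_nsmul_le {X : Type*} [AddMonoid X] {ψ : X → ℝ} {a : ℝ} (ha : 0 ≤ a)
    (hψ : ∀ x, ψ (2 • x) ≤ a * ψ x) (n : ℕ) (x : X) : ψ (2 ^ n • x) ≤ a ^ n * ψ x := by
  induction n with
  | zero => simp
  | succ n ih =>
    calc ψ (2 ^ (n + 1) • x) = ψ (2 • 2 ^ n • x) := by rw [pow_succ', mul_nsmul']
      _ ≤ a * ψ (2 ^ n • x) := hψ _
      _ ≤ a * (a ^ n * ψ x) := by gcongr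
      _ = a ^ (n + 1) * ψ x := by ring

section Convergence

variable {X Y : Type*} [AddCommGroup X] [NormedAddCommGroup Y] [NormedSpace ℝ Y]
  {ψ : X → ℝ} {a : ℝ}

lemma norm_hyersApprox_le {g : X → Y} (ha : 0 ≤ a) (hψ : ∀ x, ψ (2 • x) ≤ a * ψ x)
    (hg : ∀ x, ‖g x‖ ≤ ψ x) (n : ℕ) (x : X) : ‖hyersApprox g n x‖ ≤ (a / 4) ^ n * ψ x := by
  calc ‖hyersApprox g n x‖ = (4 ^ n)⁻¹ * ‖g (2 ^ n • x)‖ := by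
        rw [hyersApprox, norm_smul, norm_inv, norm_pow, Real.norm_ofNat]
    _ ≤ (4 ^ n)⁻¹ * (a ^ n * ψ x) := by
        gcongr
        exact (hg _).trans (le_pow_mul_of_two_nsmul_le ha hψ n x)
    _ = (a / 4) ^ n * ψ x := by rw [div_pow]; ring

lemma tendsto_hyersApprox_zero {g : X → Y} (ha : 0 ≤ a) (ha4 : a < 4)
    (hψ : ∀ x, ψ (2 • x) ≤ a * ψ x) (hg : ∀ x, ‖g x‖ ≤ ψ x) (x : X) :
    Tendsto (hyersApprox g · x) atTop (nhds 0) := by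
  refine squeeze_zero_norm (norm_hyersApprox_le ha hψ hg · x) ?_
  have hratio : a / 4 < 1 := by linarith
  simpa only [zero_mul] using
    (tendsto_pow_atTop_nhds_zero_of_lt_one (by positivity) hratio).mul_const (ψ x)

lemma IsQuadratic.tendsto_hyersApprox {f Q : X → Y} (hQ : IsQuadratic Q) (ha : 0 ≤ a) (ha4 : a < 4)
    (hψ : ∀ x, ψ (2 • x) ≤ a * ψ x) (hQf : ∀ x, ‖Q x - f x‖ ≤ ψ x) (x : X) :
    Tendsto (hyersApprox f · x) atTop (nhds (Q x)) := by
  have hdiff := tendsto_hyersApprox_zero ha ha4 hψ hQf x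
  simp only [hyersApprox_sub, hQ.hyersApprox_eq] at hdiff
  simpa only [sub_sub_cancel, sub_zero] using hdiff.const_sub (Q x)

lemma dist_hyersApprox_succ_le {f : X → Y} (ha : 0 ≤ a) (hψ : ∀ x, ψ (2 • x) ≤ a * ψ x)
    (hf : ∀ x, ‖f (2 • x) - 4 • f x‖ ≤ ψ x) (x : X) (n : ℕ) :
    dist (hyersApprox f n x) (hyersApprox f (n + 1) x) ≤ ψ x / 4 * (a / 4) ^ n := by
  rw [dist_eq_norm', hyersApprox_succ_sub, norm_smul, norm_inv, Real.norm_ofNat]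
  linarith [norm_hyersApprox_le ha hψ hf n x]

lemma exists_tendsto_hyersApprox [CompleteSpace Y] {f : X → Y} (ha : 0 ≤ a) (ha4 : a < 4)
    (hψ : ∀ x, ψ (2 • x) ≤ a * ψ x) (hf : ∀ x, ‖f (2 • x) - 4 • f x‖ ≤ ψ x) (x : X) :
    ∃ q, Tendsto (hyersApprox f · x) atTop (nhds q) ∧ ‖q - f x‖ ≤ ψ x / (4 - a) := by
  have hratio : a / 4 < 1 := by linarith
  have hstep := dist_hyersApprox_succ_le ha hψ hf x
  obtain ⟨q, hq⟩ := cauchySeq_tendsto_of_complete (cauchySeq_of_le_geometric _ _ hratio hstep)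
  refine ⟨q, hq, ?_⟩
  calc ‖q - f x‖ = dist (hyersApprox f 0 x) q := by rw [hyersApprox_zero, dist_eq_norm']
    _ ≤ ψ x / 4 / (1 - a / 4) := dist_le_of_le_geometric_of_tendsto₀ _ _ hratio hstep hq
    _ = ψ x / (4 - a) := by rw [div_div, mul_sub, mul_one, mul_div_cancel₀ a four_ne_zero]

lemma isQuadratic_of_tendsto_hyersApprox {f Q : X → Y} (ha : 0 ≤ a) (ha4 : a < 4)
    (hψ : ∀ x, ψ (2 • x) ≤ a * ψ x) (hf : ∀ x y, ‖quadraticDefect f x y‖ ≤ ψ x + ψ y)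
    (hQ : ∀ x, Tendsto (hyersApprox f · x) atTop (nhds (Q x))) : IsQuadratic Q := by
  refine isQuadratic_of_tendsto hQ fun x y => ?_
  simp only [quadraticDefect_hyersApprox]
  have hsum (z : X × X) : ψ (2 • z).1 + ψ (2 • z).2 ≤ a * (ψ z.1 + ψ z.2) :=
    (add_le_add (hψ z.1) (hψ z.2)).trans_eq (mul_add _ _ _).symm
  exact tendsto_hyersApprox_zero (ψ := fun z : X × X => ψ z.1 + ψ z.2) ha ha4 hsum
    (fun z => hf z.1 z.2) (x, y)

end Convergence

-- The constant is `3` and not `2` because `f 0` need not vanish, e.g. if `φ = 1`.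
lemma norm_map_two_nsmul_sub_le {X Y : Type*} [AddCommGroup X] [NormedAddCommGroup Y]
    [NormedSpace ℝ Y] {φ : X → ℝ} {f : X → Y} (hφ : ∀ x, φ 0 ≤ φ x)
    (hf : ∀ x y, ‖quadraticDefect f x y‖ ≤ φ x + φ y) (x : X) :
    ‖f (2 • x) - 4 • f x‖ ≤ 3 * φ x := by
  have hzero : 2 * ‖f 0‖ ≤ φ 0 + φ 0 := by
    simpa only [quadraticDefect_zero_zero, norm_neg, RCLike.norm_nsmul ℝ, nsmul_eq_mul,
      Nat.cast_ofNat] using hf 0 0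
  rw [map_two_nsmul_sub_four_nsmul]
  linarith [norm_sub_le (quadraticDefect f x x) (f 0), hf x x, hφ x]

lemma norm_two_nsmul_rpow {X : Type*} [SeminormedAddCommGroup X] [NormedSpace ℝ X] (p : ℝ)
    (x : X) : ‖2 • x‖ ^ p = 2 ^ p * ‖x‖ ^ p := by
  rw [← ofNat_smul_eq_nsmul ℝ, norm_smul, Real.norm_ofNat,
    Real.mul_rpow zero_le_two (norm_nonneg x)]

lemma norm_zero_rpow_le {X : Type*} [SeminormedAddGroup X] {p : ℝ} (hp : 0 ≤ p) (x : X) :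
    ‖(0 : X)‖ ^ p ≤ ‖x‖ ^ p :=
  Real.rpow_le_rpow (norm_nonneg _) (norm_zero.trans_le (norm_nonneg x)) hp

lemma two_rpow_lt_four {p : ℝ} (hp : p < 2) : (2 : ℝ) ^ p < 4 := by
  calc (2 : ℝ) ^ p < 2 ^ (2 : ℝ) := Real.rpow_lt_rpow_of_exponent_lt one_lt_two hp
    _ = 4 := by norm_num

lemma three_div_four_sub_two_rpow_le {p : ℝ} (hp0 : 0 ≤ p) (hp2 : p < 2) :
    3 / (4 - (2 : ℝ) ^ p) ≤ 4 / ((2 : ℝ) ^ ((2 : ℝ) - p) - 1) := by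
  have hone_le : (1 : ℝ) ≤ 2 ^ p := Real.one_le_rpow one_le_two hp0
  have hpos : (0 : ℝ) < 4 - 2 ^ p := sub_pos.mpr (two_rpow_lt_four hp2)
  have hfour : (2 : ℝ) ^ ((2 : ℝ) - p) = 4 / 2 ^ p := by
    rw [Real.rpow_sub two_pos]
    norm_num
  calc 3 / (4 - (2 : ℝ) ^ p) ≤ 4 * 2 ^ p / (4 - 2 ^ p) :=
        div_le_div_of_nonneg_right (by linarith) hpos.le
    _ = 4 / ((2 : ℝ) ^ ((2 : ℝ) - p) - 1) := by
        rw [hfour, div_sub_one (by positivity), div_div_eq_mul_div]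

theorem classical_stability_quadratic_general {X Y : Type*} [AddCommGroup X]
    [NormedAddCommGroup Y] [NormedSpace ℝ Y] [CompleteSpace Y] {φ : X → ℝ} {a C : ℝ} {f : X → Y}
    (ha : 0 ≤ a) (ha4 : a < 4) (hC : 3 / (4 - a) ≤ C)
    (hφ_zero : ∀ x, φ 0 ≤ φ x) (hφ_two : ∀ x, φ (2 • x) ≤ a * φ x)
    (hf : ∀ x y, ‖quadraticDefect f x y‖ ≤ φ x + φ y) :
    ∃! Q : X → Y, IsQuadratic Q ∧ ∀ x, ‖Q x - f x‖ ≤ C * φ x := by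
  have hφ_nonneg (x : X) : 0 ≤ φ x := by linarith [(norm_nonneg _).trans (hf x x)]
  have hC_nonneg : 0 ≤ C := (div_nonneg zero_le_three (by linarith)).trans hC
  have hmul_two {c : ℝ} (hc : 0 ≤ c) (x : X) : c * φ (2 • x) ≤ a * (c * φ x) := by
    linarith [mul_le_mul_of_nonneg_left (hφ_two x) hc]
  choose Q hQ_lim hQ_le using exists_tendsto_hyersApprox ha ha4 (hmul_two zero_le_three)
    (norm_map_two_nsmul_sub_le hφ_zero hf)
  refine ⟨Q, ⟨isQuadratic_of_tendsto_hyersApprox ha ha4 hφ_two hf hQ_lim, fun x => ?_⟩, ?_⟩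
  · calc ‖Q x - f x‖ ≤ 3 / (4 - a) * φ x := by simpa only [div_mul_eq_mul_div] using hQ_le x
      _ ≤ C * φ x := mul_le_mul_of_nonneg_right hC (hφ_nonneg x)
  · rintro R ⟨hR, hRf⟩
    ext x
    exact tendsto_nhds_unique (hR.tendsto_hyersApprox ha ha4 (hmul_two hC_nonneg) hRf x) (hQ_lim x)

/-- Classical Hyers–Ulam–Rassias stability of the quadratic equation in normed
spaces (Theorem 2.4). -/
theorem classical_stability_quadratic
    {X Y : Type*} [NormedAddCommGroup X] [NormedSpace ℝ X]
    [NormedAddCommGroup Y] [NormedSpace ℝ Y] [CompleteSpace Y]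
    (p : ℝ) (hp0 : 0 ≤ p) (hp2 : p < 2)
    (f : X → Y)
    (hf : ∀ x y : X, ‖f (x + y) + f (x - y) - 2 • f x - 2 • f y‖ ≤ ‖x‖ ^ p + ‖y‖ ^ p) :
    ∃! Q : X → Y, IsQuadratic Q ∧
      ∀ x : X, ‖Q x - f x‖ ≤ (4 / ((2 : ℝ) ^ ((2 : ℝ) - p) - 1)) * ‖x‖ ^ p :=
  classical_stability_quadratic_general (Real.rpow_nonneg zero_le_two p) (two_rpow_lt_four hp2)
    (three_div_four_sub_two_rpow_le hp0 hp2) (norm_zero_rpow_le hp0)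
    (fun x => (norm_two_nsmul_rpow p x).le) hf
end
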